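/- Let K be a field, n ≥ 2, with n invertible in K (char K = 0 or char K does not divide n), and let f(x_1,…,x_m) be a multilinear polynomial over K. Then f satisfies (S0) if and only if f satisfies both (S1) and (S2); in particular, f is a polynomial identity for M_n(K) if and only if f satisfies both (S1) and (S2). -/

import Mathlib

/-- Evaluation of the multilinear polynomial `f(x₁,…,x_m) = ∑_{σ ∈ S_m} α_σ x_{σ(1)}⋯x_{σ(m)}`
given by coefficients `α` at the tuple `a`. -/
def mlEval {K A : Type} [Field K] [Ring A] [Algebra K A] {m : ℕ}
    (α : Equiv.Perm (Fin m) → K) (a : Fin m → A) : A :=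
  ∑ σ : Equiv.Perm (Fin m), α σ • (List.ofFn fun i => a (σ i)).prod

/-- The image of the multilinear polynomial with coefficients `α` on the algebra `A`. -/
def mlImage {K A : Type} [Field K] [Ring A] [Algebra K A] {m : ℕ}
    (α : Equiv.Perm (Fin m) → K) : Set A :=
  Set.range (mlEval α)

/-- `a` is homogeneous of degree `g` in the Vasilovsky `ZMod n`-grading of `Mₙ(K)`:
`a` lies in the span of the matrix units `E i j` with `j - i ≡ g (mod n)`. -/
def VasHomog {K : Type} [Field K] {n : ℕ} (g : ZMod n)
    (a : Matrix (Fin n) (Fin n) K) : Prop :=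
  ∀ i j : Fin n, ((j.val : ZMod n) - (i.val : ZMod n)) ≠ g → a i j = 0

/-- Statement (S0): `f` vanishes on homogeneous tuples whose degrees sum to `0`. -/
def StmtS0 {K : Type} [Field K] (n : ℕ) {m : ℕ} (α : Equiv.Perm (Fin m) → K) : Prop :=
  ∀ (g : Fin m → ZMod n) (a : Fin m → Matrix (Fin n) (Fin n) K),
    (∀ i, VasHomog (g i) (a i)) → (∑ i, g i) = 0 → mlEval α a = 0

/-- Statement (S1): `f` vanishes on homogeneous tuples whose degrees sum to a nonzero element. -/
def StmtS1 {K : Type} [Field K] (n : ℕ) {m : ℕ} (α : Equiv.Perm (Fin m) → K) : Prop :=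
  ∀ (g : Fin m → ZMod n) (a : Fin m → Matrix (Fin n) (Fin n) K),
    (∀ i, VasHomog (g i) (a i)) → (∑ i, g i) ≠ 0 → mlEval α a = 0

/-- Statement (S2): `f` has trace-zero values on homogeneous tuples whose degrees sum to `0`. -/
def StmtS2 {K : Type} [Field K] (n : ℕ) {m : ℕ} (α : Equiv.Perm (Fin m) → K) : Prop :=
  ∀ (g : Fin m → ZMod n) (a : Fin m → Matrix (Fin n) (Fin n) K),
    (∀ i, VasHomog (g i) (a i)) → (∑ i, g i) = 0 → Matrix.trace (mlEval α a) = 0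

/-- The set of scalar matrices in `Mₙ(K)`. -/
def scalarSet (K : Type) [Field K] (n : ℕ) : Set (Matrix (Fin n) (Fin n) K) :=
  {b | ∃ c : K, b = c • (1 : Matrix (Fin n) (Fin n) K)}

/-- The set `slₙ(K)` of trace-zero matrices in `Mₙ(K)`. -/
def slSet (K : Type) [Field K] (n : ℕ) : Set (Matrix (Fin n) (Fin n) K) :=
  {b | Matrix.trace b = 0}

/-!
For a derivation `D`, the Leibniz rule expresses `D (f(a₁,…,a_m))` as the sum of the values of `f`
obtained by replacing one `aᵢ` by `D aᵢ`. Taking `D = [b, ·]` with `b` homogeneous of degree `d`, if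
`f` vanishes on homogeneous tuples of degree sum `s + d`, then its values on homogeneous tuples of
degree sum `s` commute with `b`.

Given (S0), a value of degree `s ≠ 0` commutes with every matrix unit of degree `-s`, which kills
its entries of degree `s`, and it has no others; this is (S1). Given (S1), a value of degree `0`
commutes with all off-diagonal matrix units, so it is scalar, and as `n` is invertible its trace
detects it. Finally (S0) and (S1) together say that `f` vanishes on all tuples of matrix units, and
these span `Mₙ(K)`.
-/

theorem leibniz_list_prod_ofFn {A : Type*} [Semiring A] {D : A → A} (map_one : D 1 = 0)
    (leibniz : ∀ x y, D (x * y) = D x * y + x * D y) {m : ℕ} (a : Fin m → A) :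
    D (List.ofFn a).prod = ∑ i, (List.ofFn (Function.update a i (D (a i)))).prod := by
  induction a using Fin.consInduction with
  | elim0 => simpa using map_one
  | cons x a ih =>
    simp [leibniz, ih, Fin.sum_univ_succ, ← Fin.cons_update, Finset.mul_sum]

theorem lie_mem_graded {A S ι : Type*} [Ring A] [SetLike S A] [AddSubgroupClass S A]
    [AddCommMonoid ι] (𝒜 : ι → S) [SetLike.GradedMonoid 𝒜] {d e : ι} {x y : A}
    (hx : x ∈ 𝒜 d) (hy : y ∈ 𝒜 e) : ⁅x, y⁆ ∈ 𝒜 (d + e) :=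
  sub_mem (SetLike.mul_mem_graded hx hy) (add_comm d e ▸ SetLike.mul_mem_graded hy hx)

section MultilinearPolynomial

variable {K A : Type} [Field K] [Ring A] [Algebra K A] {m : ℕ} (α : Equiv.Perm (Fin m) → K)

variable (A) in
/-- Evaluation of the multilinear polynomial with coefficients `α`, bundled as a multilinear map
on `A`, so that values on a basis determine it. -/
def mlEvalMultilinearMap : MultilinearMap K (fun _ : Fin m => A) A :=
  ∑ σ : Equiv.Perm (Fin m), α σ • (MultilinearMap.mkPiAlgebraFin K m A).domDomCongr σ

@[simp]
theorem mlEvalMultilinearMap_apply (a : Fin m → A) :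
    mlEvalMultilinearMap A α a = mlEval α a := by
  simp [mlEvalMultilinearMap, mlEval]

theorem mlEval_eq_zero_of_basis {ι : Type*} (b : Module.Basis ι K A)
    (h : ∀ v : Fin m → ι, mlEval α (fun i => b (v i)) = 0) (a : Fin m → A) : mlEval α a = 0 := by
  have map_eq_zero : mlEvalMultilinearMap A α = 0 :=
    Module.Basis.ext_multilinear (fun _ => b) fun v => by simpa using h v
  simpa using DFunLike.congr_fun map_eq_zero a

theorem leibniz_mlEval {D : A →ₗ[K] A} (leibniz : ∀ x y, D (x * y) = D x * y + x * D y)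
    (a : Fin m → A) :
    D (mlEval α a) = ∑ i, mlEval α (Function.update a i (D (a i))) := by
  have map_one : D 1 = 0 := by simpa using leibniz 1 1
  have leibniz_monomial (σ : Equiv.Perm (Fin m)) :
      D (List.ofFn fun i => a (σ i)).prod =
        ∑ i, (List.ofFn fun j => Function.update a i (D (a i)) (σ j)).prod := by
    rw [leibniz_list_prod_ofFn map_one leibniz]
    refine Fintype.sum_equiv σ _ _ fun i => ?_
    rw [Function.update_comp_eq_of_injective' a σ.injective]
  simp only [mlEval, map_sum, map_smul, leibniz_monomial, Finset.smul_sum]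
  exact Finset.sum_comm

variable {ι : Type*} [AddCommMonoid ι] (𝒜 : ι → Submodule K A) [SetLike.GradedMonoid 𝒜]
  {g : Fin m → ι} {a : Fin m → A}

theorem mlEval_mem_graded (ha : ∀ i, a i ∈ 𝒜 (g i)) : mlEval α a ∈ 𝒜 (∑ i, g i) := by
  refine Submodule.sum_mem _ fun σ _ => Submodule.smul_mem _ _ ?_
  rw [← Equiv.sum_comp σ g, ← List.sum_ofFn]
  exact SetLike.list_prod_ofFn_mem_graded _ _ fun i => ha (σ i)

theorem commute_mlEval_of_graded (ha : ∀ i, a i ∈ 𝒜 (g i)) {d : ι} {b : A} (hb : b ∈ 𝒜 d)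
    (h : ∀ (g' : Fin m → ι) (a' : Fin m → A), (∀ i, a' i ∈ 𝒜 (g' i)) →
      ∑ i, g' i = d + ∑ i, g i → mlEval α a' = 0) :
    Commute b (mlEval α a) := by
  have lie_eq_sum : ⁅b, mlEval α a⁆ = ∑ i, mlEval α (Function.update a i ⁅b, a i⁆) :=
    leibniz_mlEval α (D := LinearMap.mulLeft K b - LinearMap.mulRight K b)
      (fun x y => by
        simp only [LinearMap.sub_apply, LinearMap.mulLeft_apply, LinearMap.mulRight_apply]
        noncomm_ring) a
  rw [commute_iff_lie_eq, lie_eq_sum]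
  refine Finset.sum_eq_zero fun i _ => h (Pi.single i d + g) _ (fun j => ?_) ?_
  · obtain rfl | hji := eq_or_ne j i
    · simpa using lie_mem_graded 𝒜 hb (ha j)
    · simpa [hji] using ha j
  · simp [Finset.sum_add_distrib]

end MultilinearPolynomial

section Vasilovsky

variable {K : Type} [Field K] {n : ℕ}

/-- The degree `j - i` of the matrix unit `E i j` in the Vasilovsky `ZMod n`-grading. -/
def vasDegree (i j : Fin n) : ZMod n :=
  (j.val : ZMod n) - (i.val : ZMod n)

theorem vasDegree_add_vasDegree (i j k : Fin n) :
    vasDegree i j + vasDegree j k = vasDegree i k := by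
  rw [vasDegree, vasDegree, vasDegree, add_comm, sub_add_sub_cancel]

theorem vasDegree_eq_zero_iff {i j : Fin n} : vasDegree i j = 0 ↔ i = j := by
  rw [vasDegree, sub_eq_zero, ZMod.natCast_eq_natCast_iff', Nat.mod_eq_of_lt i.isLt,
    Nat.mod_eq_of_lt j.isLt, Fin.val_inj, eq_comm]

variable (K) in
/-- The homogeneous component of degree `g` in the Vasilovsky `ZMod n`-grading of `Mₙ(K)`, bundled
as a submodule so that `SetLike.GradedMonoid` applies to the family of components. -/
def vasComponent (g : ZMod n) : Submodule K (Matrix (Fin n) (Fin n) K) where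
  carrier := {a | VasHomog g a}
  zero_mem' _ _ _ := rfl
  add_mem' ha hb i j hij := by rw [Matrix.add_apply, ha i j hij, hb i j hij, add_zero]
  smul_mem' c a ha i j hij := by rw [Matrix.smul_apply, ha i j hij, smul_zero]

theorem mem_vasComponent_iff {g : ZMod n} {a : Matrix (Fin n) (Fin n) K} :
    a ∈ vasComponent K g ↔ ∀ i j, vasDegree i j ≠ g → a i j = 0 :=
  Iff.rfl

theorem single_mem_vasComponent (i j : Fin n) (c : K) :
    Matrix.single i j c ∈ vasComponent K (vasDegree i j) := by
  refine mem_vasComponent_iff.2 fun k l hkl => Matrix.single_apply_of_ne _ _ _ _ _ ?_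
  rintro ⟨rfl, rfl⟩
  exact hkl rfl

instance vasComponent.gradedMonoid : SetLike.GradedMonoid (vasComponent K (n := n)) where
  one_mem := mem_vasComponent_iff.2 fun _ _ hij =>
    Matrix.one_apply_ne (mt vasDegree_eq_zero_iff.2 hij)
  mul_mem g h a b ha hb := mem_vasComponent_iff.2 fun i j hij => by
    rw [Matrix.mul_apply]
    refine Finset.sum_eq_zero fun k _ => ?_
    by_cases hik : vasDegree i k = g
    · have hkj : vasDegree k j ≠ h := by
        rintro rfl
        exact hij (by rw [← hik, vasDegree_add_vasDegree])
      rw [hb k j hkj, mul_zero]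
    · rw [ha i k hik, zero_mul]

variable {m : ℕ} {α : Equiv.Perm (Fin m) → K}

theorem StmtS0.stmtS1 (h0 : StmtS0 n α) : StmtS1 n α := by
  intro g a ha hg
  ext i j
  by_cases hij : vasDegree i j = ∑ k, g k
  · have hne : j ≠ i := by
      rintro rfl
      exact hg (by rw [← hij, vasDegree_eq_zero_iff])
    have commute_single : Commute (Matrix.single j i 1) (mlEval α a) :=
      commute_mlEval_of_graded α (vasComponent K) ha (single_mem_vasComponent j i 1)
        fun g' a' ha' hg' => h0 g' a' ha' <| by
          rw [hg', ← hij, vasDegree_add_vasDegree, vasDegree_eq_zero_iff]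
    exact Matrix.row_eq_zero_of_commute_single commute_single hne
  · exact mlEval_mem_graded α (vasComponent K) ha i j hij

theorem StmtS0.stmtS2 (h0 : StmtS0 n α) : StmtS2 n α := fun g a ha hg => by
  rw [h0 g a ha hg, Matrix.trace_zero]

theorem StmtS1.mlEval_mem_range_scalar (h1 : StmtS1 n α) {g : Fin m → ZMod n}
    {a : Fin m → Matrix (Fin n) (Fin n) K} (ha : ∀ i, VasHomog (g i) (a i)) (hg : ∑ i, g i = 0) :
    mlEval α a ∈ Set.range (Matrix.scalar (Fin n)) :=
  Matrix.mem_range_scalar_of_commute_single fun i j hij =>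
    commute_mlEval_of_graded α (vasComponent K) ha (single_mem_vasComponent i j 1)
      fun g' a' ha' hg' => h1 g' a' ha' <| by
        rwa [hg', hg, add_zero, Ne, vasDegree_eq_zero_iff]

theorem StmtS1.stmtS0 (h1 : StmtS1 n α) (h2 : StmtS2 n α) (hchar : (n : K) ≠ 0) :
    StmtS0 n α := by
  intro g a ha hg
  obtain ⟨c, hc⟩ := h1.mlEval_mem_range_scalar ha hg
  have trace_eq_zero : (n : K) * c = 0 := by
    simpa [← hc, Matrix.trace] using h2 g a ha hg
  rw [← hc, (mul_eq_zero.1 trace_eq_zero).resolve_left hchar, map_zero]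

theorem stmtS0_iff_forall_mlEval_eq_zero :
    StmtS0 n α ↔ ∀ a : Fin m → Matrix (Fin n) (Fin n) K, mlEval α a = 0 := by
  refine ⟨fun h0 => mlEval_eq_zero_of_basis α (Matrix.stdBasis K (Fin n) (Fin n)) fun v => ?_,
    fun h g a _ _ => h a⟩
  have stdBasis_mem (i : Fin m) :
      Matrix.stdBasis K (Fin n) (Fin n) (v i) ∈ vasComponent K (vasDegree (v i).1 (v i).2) := by
    rw [← Prod.mk.eta (p := v i), Matrix.stdBasis_eq_single]
    exact single_mem_vasComponent _ _ 1
  by_cases hsum : ∑ i, vasDegree (v i).1 (v i).2 = 0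
  · exact h0 _ _ stdBasis_mem hsum
  · exact h0.stmtS1 _ _ stdBasis_mem hsum

end Vasilovsky

/-- when `n` is invertible in `K`, (S0) is equivalent to (S1) ∧ (S2); in particular,
`f` is a polynomial identity for `Mₙ(K)` iff `f` satisfies both (S1) and (S2). -/
theorem stmt_4 {K : Type} [Field K] (n : ℕ) (hn : 2 ≤ n) (hchar : (n : K) ≠ 0) {m : ℕ}
    (α : Equiv.Perm (Fin m) → K) :
    (StmtS0 n α ↔ StmtS1 n α ∧ StmtS2 n α) ∧
      ((∀ a : Fin m → Matrix (Fin n) (Fin n) K, mlEval α a = 0) ↔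
        StmtS1 n α ∧ StmtS2 n α) := by
  have stmtS0_iff : StmtS0 n α ↔ StmtS1 n α ∧ StmtS2 n α :=
    ⟨fun h0 => ⟨h0.stmtS1, h0.stmtS2⟩, fun ⟨h1, h2⟩ => h1.stmtS0 h2 hchar⟩
  exact ⟨stmtS0_iff, stmtS0_iff_forall_mlEval_eq_zero.symm.trans stmtS0_iff⟩
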